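/- For the full shift T on X = ∏_{n∈ℤ} M over a perfect Polish metric space M, the set PD = {μ ∈ M(T) : d̄_μ(x) = +∞ for μ-a.e. x ∈ X} (equivalently, the set of μ with packing dimension dim_P(μ) = +∞) is a dense Gδ subset of M(T). -/

import Mathlib

open Filter MeasureTheory Topology Metric Set
open scoped ENNReal NNReal

noncomputable section
attribute [local instance] Classical.propDecidable

/-- The full (bilateral) shift on the product space `ℤ → M`: `(T x) i = x (i - 1)`. -/
def fullShift {M : Type*} (x : ℤ → M) : ℤ → M := fun i => x (i - 1)

/-- The metric `d(x,y) = ∑_{n ∈ ℤ} 2^{-|n|} ρ(xₙ,yₙ)/(1 + ρ(xₙ,yₙ))` on `ℤ → M`,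
compatible with the product topology. -/
def shiftDist {M : Type*} [MetricSpace M] (x y : ℤ → M) : ℝ :=
  ∑' n : ℤ, (1 / 2 : ℝ) ^ n.natAbs * (dist (x n) (y n) / (1 + dist (x n) (y n)))

/-- Lower local dimension `d̲_μ(x) = liminf_{ε → 0⁺} log μ(B(x,ε)) / log ε` of `μ` at `x`,
with respect to the distance function `d`; by convention it is `∞` if some ball
centered at `x` has measure zero. -/
def lowerLocalDim {X : Type*} [MeasurableSpace X] (d : X → X → ℝ)
    (μ : Measure X) (x : X) : ℝ≥0∞ :=
  if ∃ ε > 0, μ {y | d x y < ε} = 0 then ⊤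
  else liminf (fun ε : ℝ =>
    ENNReal.ofReal (Real.log (μ {y | d x y < ε}).toReal / Real.log ε)) (𝓝[>] (0 : ℝ))

/-- Upper local dimension `d̄_μ(x) = limsup_{ε → 0⁺} log μ(B(x,ε)) / log ε`. -/
def upperLocalDim {X : Type*} [MeasurableSpace X] (d : X → X → ℝ)
    (μ : Measure X) (x : X) : ℝ≥0∞ :=
  if ∃ ε > 0, μ {y | d x y < ε} = 0 then ⊤
  else limsup (fun ε : ℝ =>
    ENNReal.ofReal (Real.log (μ {y | d x y < ε}).toReal / Real.log ε)) (𝓝[>] (0 : ℝ))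

/-- The ratio `log τ_r(x) / (- log r)`, where `τ_r(x) = inf {n ≥ 1 | Tⁿ x ∈ B̄(x,r)}` is the
first return time of `x` to the closed ball `B̄(x,r)`; by convention it is `∞` when the
return time is infinite. -/
def recRatio {X : Type*} (d : X → X → ℝ) (T : X → X) (x : X) (r : ℝ) : ℝ≥0∞ :=
  if ∃ n : ℕ, 1 ≤ n ∧ d (T^[n] x) x ≤ r then
    ENNReal.ofReal
      (Real.log ((sInf {n : ℕ | 1 ≤ n ∧ d (T^[n] x) x ≤ r} : ℕ) : ℝ) / (- Real.log r))
  else ⊤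

/-- Lower recurrence rate `R̲(x) = liminf_{r → 0⁺} log τ_r(x) / (- log r)`. -/
def lowerRecRate {X : Type*} (d : X → X → ℝ) (T : X → X) (x : X) : ℝ≥0∞ :=
  liminf (recRatio d T x) (𝓝[>] (0 : ℝ))

/-- Upper recurrence rate `R̄(x) = limsup_{r → 0⁺} log τ_r(x) / (- log r)`. -/
def upperRecRate {X : Type*} (d : X → X → ℝ) (T : X → X) (x : X) : ℝ≥0∞ :=
  limsup (recRatio d T x) (𝓝[>] (0 : ℝ))

/-- The ratio `log τ_r(x,y) / (- log r)`, where `τ_r(x,y) = inf {n ≥ 1 | Tⁿ x ∈ B̄(y,r)}` is the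
first entrance time of the orbit of `x` into the closed ball `B̄(y,r)`; by convention `∞`
when the entrance time is infinite. -/
def waitRatio {X : Type*} (d : X → X → ℝ) (T : X → X) (x y : X) (r : ℝ) : ℝ≥0∞ :=
  if ∃ n : ℕ, 1 ≤ n ∧ d (T^[n] x) y ≤ r then
    ENNReal.ofReal
      (Real.log ((sInf {n : ℕ | 1 ≤ n ∧ d (T^[n] x) y ≤ r} : ℕ) : ℝ) / (- Real.log r))
  else ⊤

/-- Lower quantitative waiting time indicator `R̲(x,y)`. -/
def lowerWaitRate {X : Type*} (d : X → X → ℝ) (T : X → X) (x y : X) : ℝ≥0∞ :=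
  liminf (waitRatio d T x y) (𝓝[>] (0 : ℝ))

/-- Upper quantitative waiting time indicator `R̄(x,y)`. -/
def upperWaitRate {X : Type*} (d : X → X → ℝ) (T : X → X) (x y : X) : ℝ≥0∞ :=
  limsup (waitRatio d T x y) (𝓝[>] (0 : ℝ))

/-- The entropy `H(P) = ∑_c -μ(P_c) log μ(P_c)` of the finite measurable partition
`P_c = f ⁻¹ {c}` of `X` induced by a map `f` into a finite set. -/
def partitionEntropy {X F : Type*} [MeasurableSpace X] [Fintype F]
    (μ : Measure X) (f : X → F) : ℝ :=
  ∑ c : F, Real.negMulLog ((μ (f ⁻¹' {c})).toReal)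

/-- The Kolmogorov–Sinai (measure-theoretic) entropy `h_μ(T)`: the supremum, over all finite
measurable partitions (coded by measurable maps `f : X → Fin k`), of the limit of
`H(⋁_{i<n} T⁻ⁱ P) / n`. -/
def kolmogorovSinaiEntropy {X : Type*} [MeasurableSpace X] (T : X → X) (μ : Measure X) :
    ℝ≥0∞ :=
  ⨆ (k : ℕ) (f : X → Fin k) (_ : Measurable f),
    ENNReal.ofReal
      (liminf (fun n : ℕ =>
        partitionEntropy μ (fun x (i : Fin n) => f (T^[(i : ℕ)] x)) / n) atTop)

end

/-!
Write `B̄(x, ε)` for the closed ball. The upper local dimension of `μ` at `x` is infinite iff for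
every `k` there are arbitrarily small `ε` with `μ (B̄(x, ε)) < ε ^ k`. For fixed `ε` and `k` this
inequality is open in `(μ, x)`, because the mass of a closed set is weakly upper semicontinuous.
Hence infinite dimension at `x` is a `Gδ` condition on `(μ, x)`, and inner regularity turns it into
a `Gδ` condition on `μ` when it is imposed almost everywhere.

For density, let `μ` be invariant and replace every symbol of a `μ`-random sequence by a nearby
random one, with fresh atomless noise at every coordinate. The noise takes values in Cantor sets,
which exist near every point of `M` because `M` is perfect. The resulting measure is invariant and
close to `μ`. A ball of radius proportional to `2⁻ᴺ` constrains `N` coordinates to within a fixed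
distance `r`, so it has mass at most `c ^ N`, where `c` can be made arbitrarily small by decreasing
`r`. Every exponent is therefore beaten at every point.
-/

section LocalDimension

lemma limsup_eq_top_iff_forall_natCast {ι : Type*} {l : Filter ι} {f : ι → ℝ≥0∞} :
    limsup f l = ⊤ ↔ ∀ k : ℕ, ∃ᶠ i in l, (k : ℝ≥0∞) < f i := by
  refine ⟨fun h k ↦ frequently_lt_of_lt_limsup (by isBoundedDefault)
    (h ▸ ENNReal.natCast_lt_top k), fun h ↦ ENNReal.eq_top_of_forall_nnreal_le fun r ↦ ?_⟩
  obtain ⟨k, hk⟩ := exists_nat_ge r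
  have hrk : (r : ℝ≥0∞) ≤ k := mod_cast hk
  exact le_limsup_of_frequently_le ((h k).mono fun i hi ↦ hrk.trans hi.le)

lemma natCast_lt_ofReal_log_div_log_iff {m ε : ℝ} (hm : 0 < m) (hε : ε ∈ Ioo 0 1) (k : ℕ) :
    (k : ℝ≥0∞) < ENNReal.ofReal (Real.log m / Real.log ε) ↔ m < ε ^ k := by
  rw [← ENNReal.ofReal_natCast, ENNReal.ofReal_lt_ofReal_iff_of_nonneg k.cast_nonneg,
    lt_div_iff_of_neg (Real.log_neg hε.1 hε.2), ← Real.log_pow,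
    Real.log_lt_log_iff hm (pow_pos hε.1 k)]

variable {X : Type*} [MeasurableSpace X] {d : X → X → ℝ} {x : X}

lemma upperLocalDim_eq_top_iff_frequently_ball {μ : Measure X} [IsFiniteMeasure μ] :
    upperLocalDim d μ x = ⊤ ↔
      ∀ k : ℕ, ∃ᶠ ε in 𝓝[>] (0 : ℝ), μ {y | d x y < ε} < ENNReal.ofReal (ε ^ k) := by
  unfold upperLocalDim
  split_ifs with hnull
  · obtain ⟨δ, hδ, hμδ⟩ := hnull
    refine iff_of_true rfl fun k ↦ Eventually.frequently ?_
    filter_upwards [Ioo_mem_nhdsGT hδ] with ε hε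
    have hμε : μ {y | d x y < ε} = 0 :=
      measure_mono_null (fun y (hy : d x y < ε) ↦ hy.trans hε.2) hμδ
    simpa [hμε] using pow_pos hε.1 k
  · push Not at hnull
    rw [limsup_eq_top_iff_forall_natCast]
    refine forall_congr' fun k ↦ frequently_congr ?_
    filter_upwards [Ioo_mem_nhdsGT zero_lt_one] with ε hε
    rw [natCast_lt_ofReal_log_div_log_iff (ENNReal.toReal_pos (hnull ε hε.1) (measure_ne_top _ _))
      hε, ENNReal.lt_ofReal_iff_toReal_lt (measure_ne_top _ _)]

lemma upperLocalDim_eq_top_iff_frequently_closedBall {μ : Measure X} [IsFiniteMeasure μ] :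
    upperLocalDim d μ x = ⊤ ↔
      ∀ k : ℕ, ∃ᶠ ε in 𝓝[>] (0 : ℝ), μ {y | d x y ≤ ε} < ENNReal.ofReal (ε ^ k) := by
  rw [upperLocalDim_eq_top_iff_frequently_ball]
  refine ⟨fun h k ↦ ?_, fun h k ↦ (h k).mono fun ε hε ↦
    (measure_mono fun y (hy : d x y < ε) ↦ hy.le).trans_lt hε⟩
  have hhalf : Tendsto (fun ε : ℝ ↦ ε / 2) (𝓝[>] 0) (𝓝[>] 0) := by
    refine tendsto_nhdsWithin_iff.2 ⟨?_, eventually_mem_nhdsWithin.mono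
      fun ε (hε : 0 < ε) ↦ mem_Ioi.2 (half_pos hε)⟩
    exact ((continuous_id.div_const 2).tendsto' 0 0 (zero_div 2)).mono_left nhdsWithin_le_nhds
  refine hhalf.frequently (((h (2 * k)).and_eventually
    (Ioo_mem_nhdsGT (by norm_num : (0 : ℝ) < 1 / 2))).mono ?_)
  rintro ε ⟨hμε, hε0, hε1⟩
  calc μ {y | d x y ≤ ε / 2}
      ≤ μ {y | d x y < ε} := measure_mono fun y (hy : d x y ≤ ε / 2) ↦ by
        simpa using hy.trans_lt (half_lt_self hε0)
    _ < ENNReal.ofReal (ε ^ (2 * k)) := hμε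
    _ ≤ ENNReal.ofReal ((ε / 2) ^ k) := by
        rw [pow_mul]
        gcongr
        nlinarith

/- Apply the hypothesis with `c = 2⁻⁽²ᵏ⁺¹⁾`: at `ε = 2⁻ᴺ q` the mass is at most
`2⁻ᴺ · 2⁻ᴺᵏ · 2⁻ᴺᵏ`, which is less than `εᵏ` as soon as `2⁻ᴺ < min q 1`. -/
lemma upperLocalDim_eq_top_of_forall_measure_le_pow {μ : Measure X} [IsFiniteMeasure μ]
    (h : ∀ c : ℝ≥0∞, c ≠ 0 → ∃ q > 0, ∀ N : ℕ, μ {y | d x y ≤ (1 / 2) ^ N * q} ≤ c ^ N) :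
    upperLocalDim d μ x = ⊤ := by
  refine upperLocalDim_eq_top_iff_frequently_closedBall.2 fun k ↦ ?_
  obtain ⟨q, hq, hμ⟩ := h (ENNReal.ofReal ((1 / 2) ^ (2 * k + 1))) (by simp)
  have hpow : Tendsto (fun N : ℕ ↦ (1 / 2 : ℝ) ^ N) atTop (𝓝 0) :=
    tendsto_pow_atTop_nhds_zero_of_lt_one (by norm_num) (by norm_num)
  have hradius : Tendsto (fun N : ℕ ↦ (1 / 2) ^ N * q) atTop (𝓝[>] 0) :=
    tendsto_nhdsWithin_iff.2 ⟨by simpa using hpow.mul_const q,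
      Eventually.of_forall fun N ↦ mem_Ioi.2 (by positivity)⟩
  refine hradius.frequently (Eventually.frequently ?_)
  filter_upwards [hpow.eventually_lt_const hq, hpow.eventually_lt_const one_pos] with N hNq hN1
  refine (hμ N).trans_lt ?_
  rw [← ENNReal.ofReal_pow (by positivity), ENNReal.ofReal_lt_ofReal_iff (by positivity),
    pow_right_comm]
  set s : ℝ := (1 / 2) ^ N
  have : 0 < s := by positivity
  calc s ^ (2 * k + 1) = s ^ k * s ^ k * s := by ring
    _ < s ^ k * s ^ k := mul_lt_of_lt_one_right (by positivity) hN1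
    _ ≤ s ^ k * q ^ k := by gcongr
    _ = (s * q) ^ k := (mul_pow s q k).symm

end LocalDimension

section WeakTopology

variable {X : Type*} [TopologicalSpace X] [MeasurableSpace X]

lemma isOpen_setOf_measure_lt_of_isClosed [HasOuterApproxClosed X] [OpensMeasurableSpace X]
    {F : Set X} (hF : IsClosed F) (c : ℝ≥0∞) :
    IsOpen {μ : ProbabilityMeasure X | μ.toMeasure F < c} :=
  isOpen_iff_mem_nhds.2 fun _ hμ ↦ eventually_lt_of_limsup_lt
    ((ProbabilityMeasure.limsup_measure_closed_le_of_tendsto tendsto_id hF).trans_lt hμ)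

lemma isOpen_setOf_lt_measure_of_isOpen [HasOuterApproxClosed X] [OpensMeasurableSpace X]
    {G : Set X} (hG : IsOpen G) (c : ℝ≥0∞) :
    IsOpen {μ : ProbabilityMeasure X | c < μ.toMeasure G} :=
  isOpen_iff_mem_nhds.2 fun _ hμ ↦ eventually_lt_of_lt_liminf
    (hμ.trans_le (ProbabilityMeasure.le_liminf_measure_open_of_tendsto tendsto_id hG))

/- The measure of the section over `x` is the measure of `F` under `δ_x ⊗ μ`, which depends
continuously on `(μ, x)`. -/
lemma isOpen_setOf_measure_section_lt [SecondCountableTopology X]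
    [TopologicalSpace.PseudoMetrizableSpace X] [OpensMeasurableSpace X]
    {F : Set (X × X)} (hF : IsClosed F) (c : ℝ≥0∞) :
    IsOpen {p : ProbabilityMeasure X × X | p.1.toMeasure (Prod.mk p.2 ⁻¹' F) < c} := by
  have hcont : Continuous fun p : ProbabilityMeasure X × X ↦ (diracProba p.2).prod p.1 := by
    have := continuous_diracProba (X := X)
    fun_prop
  have hsection (p : ProbabilityMeasure X × X) :
      ((diracProba p.2).prod p.1).toMeasure F = p.1.toMeasure (Prod.mk p.2 ⁻¹' F) := by
    rw [ProbabilityMeasure.toMeasure_prod, Measure.prod_apply hF.measurableSet, diracProba,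
      ProbabilityMeasure.coe_mk,
      lintegral_dirac' _ (measurable_measure_prodMk_left hF.measurableSet)]
  simp only [← hsection]
  exact (isOpen_setOf_measure_lt_of_isClosed hF c).preimage hcont

lemma isGδ_setOf_upperLocalDim_eq_top [SecondCountableTopology X]
    [TopologicalSpace.PseudoMetrizableSpace X] [OpensMeasurableSpace X]
    {d : X → X → ℝ} (hd : Continuous (Function.uncurry d)) :
    IsGδ {p : ProbabilityMeasure X × X | upperLocalDim d p.1.toMeasure p.2 = ⊤} := by
  obtain ⟨U, hU⟩ := (𝓝[>] (0 : ℝ)).exists_antitone_basis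
  have heq : {p : ProbabilityMeasure X × X | upperLocalDim d p.1.toMeasure p.2 = ⊤} =
      ⋂ (k : ℕ) (n : ℕ), ⋃ ε ∈ U n,
        {p | p.1.toMeasure {y | d p.2 y ≤ ε} < ENNReal.ofReal (ε ^ k)} := by
    ext p
    simp [upperLocalDim_eq_top_iff_frequently_closedBall, hU.toHasBasis.frequently_iff]
  rw [heq]
  exact .iInter fun k ↦ .iInter_of_isOpen fun n ↦ isOpen_biUnion fun ε _ ↦
    isOpen_setOf_measure_section_lt (isClosed_le hd continuous_const) _

variable [PolishSpace X] [BorelSpace X]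

lemma isOpen_setOf_lt_measure_section {O : Set (ProbabilityMeasure X × X)} (hO : IsOpen O)
    (c : ℝ≥0∞) : IsOpen {μ : ProbabilityMeasure X | c < μ.toMeasure (Prod.mk μ ⁻¹' O)} := by
  refine isOpen_iff_mem_nhds.2 fun μ hμ ↦ ?_
  obtain ⟨K, hKO, hK, hcK⟩ := (hO.preimage (.prodMk_right μ)).measurableSet.exists_lt_isCompact hμ
  obtain ⟨V, W, hV, hW, hμV, hKW, hVW⟩ := generalized_tube_lemma isCompact_singleton hK hO
    (singleton_prod.trans_subset (image_subset_iff.2 hKO))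
  filter_upwards [hV.mem_nhds (hμV rfl), (isOpen_setOf_lt_measure_of_isOpen hW c).mem_nhds
    (hcK.trans_le (measure_mono hKW))] with ν hνV hcW
  exact lt_of_lt_of_le hcW (measure_mono fun x hx ↦ hVW ⟨hνV, hx⟩)

lemma isGδ_setOf_ae_mem_of_isOpen {O : Set (ProbabilityMeasure X × X)} (hO : IsOpen O) :
    IsGδ {μ : ProbabilityMeasure X | ∀ᵐ x ∂μ.toMeasure, (μ, x) ∈ O} := by
  obtain ⟨c, -, hc, hclim⟩ := exists_seq_strictMono_tendsto' (zero_lt_one (α := ℝ≥0∞))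
  have heq : {μ : ProbabilityMeasure X | ∀ᵐ x ∂μ.toMeasure, (μ, x) ∈ O} =
      ⋂ n : ℕ, {μ | c n < μ.toMeasure (Prod.mk μ ⁻¹' O)} := by
    ext μ
    have hmeas : MeasurableSet (Prod.mk μ ⁻¹' O) := (hO.preimage (.prodMk_right μ)).measurableSet
    have hae : (∀ᵐ x ∂μ.toMeasure, (μ, x) ∈ O) ↔ μ.toMeasure (Prod.mk μ ⁻¹' O) = 1 :=
      mem_ae_iff.trans (prob_compl_eq_zero_iff hmeas)
    simp only [mem_iInter, mem_ofPred_eq, hae]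
    exact ⟨fun h n ↦ h ▸ (hc n).2,
      fun h ↦ prob_le_one.antisymm (le_of_tendsto' hclim fun n ↦ (h n).le)⟩
  rw [heq]
  exact .iInter_of_isOpen fun n ↦ isOpen_setOf_lt_measure_section hO (c n)

lemma isGδ_setOf_ae_mem {S : Set (ProbabilityMeasure X × X)} (hS : IsGδ S) :
    IsGδ {μ : ProbabilityMeasure X | ∀ᵐ x ∂μ.toMeasure, (μ, x) ∈ S} := by
  obtain ⟨O, hO, rfl⟩ := isGδ_iff_eq_iInter_nat.1 hS
  simp only [mem_iInter, ae_all_iff, ofPred_forall]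
  exact .iInter fun n ↦ isGδ_setOf_ae_mem_of_isOpen (hO n)

end WeakTopology

section ShiftDist

variable {M : Type*} [MetricSpace M]

lemma summable_one_half_pow_natAbs : Summable fun n : ℤ ↦ (1 / 2 : ℝ) ^ n.natAbs :=
  .of_nat_of_neg (by simpa using summable_geometric_two) (by simpa using summable_geometric_two)

lemma norm_one_half_pow_mul_dist_div_le (x y : ℤ → M) (n : ℤ) :
    ‖(1 / 2 : ℝ) ^ n.natAbs * (dist (x n) (y n) / (1 + dist (x n) (y n)))‖ ≤
      (1 / 2) ^ n.natAbs := by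
  rw [Real.norm_of_nonneg (by positivity)]
  refine mul_le_of_le_one_right (by positivity) ((div_le_one (by positivity)).2 ?_)
  exact le_add_of_nonneg_left zero_le_one

lemma continuous_shiftDist :
    Continuous (Function.uncurry shiftDist : (ℤ → M) × (ℤ → M) → ℝ) := by
  refine continuous_tsum (fun n ↦ ?_) summable_one_half_pow_natAbs
    fun n p ↦ norm_one_half_pow_mul_dist_div_le p.1 p.2 n
  have hdist : Continuous fun p : (ℤ → M) × (ℤ → M) ↦ dist (p.1 n) (p.2 n) := by fun_prop
  exact continuous_const.mul (hdist.div (continuous_const.add hdist) fun p ↦ by positivity)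

lemma one_half_pow_mul_dist_div_le_shiftDist (x y : ℤ → M) (n : ℤ) :
    (1 / 2 : ℝ) ^ n.natAbs * (dist (x n) (y n) / (1 + dist (x n) (y n))) ≤ shiftDist x y :=
  (Summable.of_norm_bounded summable_one_half_pow_natAbs
    (norm_one_half_pow_mul_dist_div_le x y)).le_tsum n fun _ _ ↦ by positivity

lemma dist_le_of_shiftDist_le {x y : ℤ → M} {r : ℝ} (hr : 0 ≤ r) {N : ℕ} {n : ℤ}
    (hn : n.natAbs ≤ N) (h : shiftDist x y ≤ (1 / 2) ^ N * (r / (1 + r))) :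
    dist (x n) (y n) ≤ r := by
  have hweight : (1 / 2 : ℝ) ^ N ≤ (1 / 2) ^ n.natAbs :=
    pow_le_pow_of_le_one (by norm_num) (by norm_num) hn
  have hterm : (1 / 2 : ℝ) ^ n.natAbs * (dist (x n) (y n) / (1 + dist (x n) (y n))) ≤
      (1 / 2) ^ n.natAbs * (r / (1 + r)) :=
    (one_half_pow_mul_dist_div_le_shiftDist x y n).trans (h.trans (by gcongr))
  have hfrac := le_of_mul_le_mul_left hterm (by positivity)
  rw [div_le_div_iff₀ (by positivity) (by positivity)] at hfrac
  linarith

end ShiftDist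

section UniformlyDiffuse

variable {M : Type*} [PseudoMetricSpace M] [MeasurableSpace M]

/-- A family of measures is uniformly diffuse if the mass of the closed balls of radius `r`
tends to `0` as `r → 0`, uniformly in the center of the ball and in the member of the family. -/
def UniformlyDiffuse {ι : Type*} (ν : ι → Measure M) : Prop :=
  ∀ c : ℝ≥0∞, c ≠ 0 → ∃ r > 0, ∀ i y, ν i (closedBall y r) ≤ c

lemma UniformlyDiffuse.comp {ι κ : Type*} {ν : ι → Measure M} (hν : UniformlyDiffuse ν)
    (f : κ → ι) : UniformlyDiffuse (ν ∘ f) := fun c hc ↦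
  let ⟨r, hr, hνr⟩ := hν c hc
  ⟨r, hr, fun i ↦ hνr (f i)⟩

variable [CompleteSpace M] [SecondCountableTopology M] [BorelSpace M]

lemma exists_measure_closedBall_le (ν : Measure M) [IsFiniteMeasure ν] [NullSingletonClass ν]
    {c : ℝ≥0∞} (hc : c ≠ 0) : ∃ r > 0, ∀ y, ν (closedBall y r) ≤ c := by
  obtain ⟨K, -, hK, -, hνK⟩ :=
    MeasurableSet.univ.exists_isCompact_isClosed_sdiff_lt (measure_ne_top ν _) hc
  choose U hU hUo hνU using fun z : M ↦
    exists_isOpen_lt_of_lt {z} c ((measure_singleton (μ := ν) z).trans_lt (pos_iff_ne_zero.2 hc))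
  obtain ⟨δ, hδ, hball⟩ := lebesgue_number_lemma_of_metric hK hUo
    fun z _ ↦ mem_iUnion.2 ⟨z, hU z rfl⟩
  refine ⟨δ / 3, by positivity, fun y ↦ ?_⟩
  by_cases hy : Disjoint (closedBall y (δ / 3)) K
  · exact (measure_mono (subset_sdiff.2 ⟨subset_univ _, hy⟩)).trans hνK.le
  · obtain ⟨z, hzy, hzK⟩ := not_disjoint_iff.1 hy
    obtain ⟨w, hw⟩ := hball z hzK
    refine (measure_mono fun p hp ↦ hw ?_).trans (hνU w).le
    rw [mem_closedBall] at hp hzy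
    rw [mem_ball]
    linarith [dist_triangle_right p z y]

lemma uniformlyDiffuse_of_finite {ι : Type*} [Finite ι] (ν : ι → Measure M)
    [∀ i, IsFiniteMeasure (ν i)] [∀ i, NullSingletonClass (ν i)] : UniformlyDiffuse ν := by
  intro c hc
  choose r hr hν using fun i ↦ exists_measure_closedBall_le (ν i) hc
  obtain ⟨s, hs, hsr⟩ : ∃ s > 0, ∀ i, s < r i := by
    simpa using Pi.exists_forall_pos_add_lt (x := 0) hr
  exact ⟨s, hs, fun i y ↦ (measure_mono (closedBall_subset_closedBall (hsr i).le)).trans (hν i y)⟩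

end UniformlyDiffuse

section PerturbSymbols

variable {ι A B Ω : Type*} [MeasurableSpace A] [MeasurableSpace B] [MeasurableSpace Ω]

/-- The law of the sequence obtained from a `μ`-random sequence `a` by replacing each symbol
`a n` with `φ (a n) (ω n)`, where the noise variables `ω n` have law `P` and are independent of
each other and of `a`. It is meaningful only for a probability measure `P`, as is
`Measure.infinitePi`. -/
noncomputable def perturbSymbols (φ : A → Ω → B) (P : Measure Ω) (μ : Measure (ι → A)) :
    Measure (ι → B) :=
  (μ.prod (Measure.infinitePi fun _ ↦ P)).map fun p n ↦ φ (p.1 n) (p.2 n)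

variable {φ : A → Ω → B} {P : Measure Ω} [IsProbabilityMeasure P]

lemma measurable_apply_coordinates (hφ : Measurable (Function.uncurry φ)) :
    Measurable fun (p : (ι → A) × (ι → Ω)) n ↦ φ (p.1 n) (p.2 n) := by
  fun_prop

lemma isProbabilityMeasure_perturbSymbols {μ : Measure (ι → A)} [IsProbabilityMeasure μ]
    (hφ : Measurable (Function.uncurry φ)) : IsProbabilityMeasure (perturbSymbols φ P μ) :=
  Measure.isProbabilityMeasure_map (measurable_apply_coordinates hφ).aemeasurable

lemma perturbSymbols_pi_le {μ : Measure (ι → A)} [IsProbabilityMeasure μ]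
    (hφ : Measurable (Function.uncurry φ)) {S : Finset ι} {t : ι → Set B}
    (ht : ∀ n, MeasurableSet (t n)) {c : ℝ≥0∞} (hc : ∀ a n, P.map (φ a) (t n) ≤ c) :
    perturbSymbols φ P μ ((S : Set ι).pi t) ≤ c ^ S.card := by
  have hS : MeasurableSet ((S : Set ι).pi t) := .pi S.countable_toSet fun n _ ↦ ht n
  have hmeas := measurable_apply_coordinates (ι := ι) hφ
  rw [perturbSymbols, Measure.map_apply hmeas hS, Measure.prod_apply (hmeas hS)]
  have hsection (x : ι → A) : Measure.infinitePi (fun _ ↦ P)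
      (Prod.mk x ⁻¹' ((fun p n ↦ φ (p.1 n) (p.2 n)) ⁻¹' (S : Set ι).pi t)) ≤ c ^ S.card := by
    have hφx (n : ι) : Measurable (φ (x n)) := hφ.of_uncurry_left
    calc Measure.infinitePi (fun _ ↦ P) ((S : Set ι).pi fun n ↦ φ (x n) ⁻¹' t n)
        = ∏ n ∈ S, P (φ (x n) ⁻¹' t n) := Measure.infinitePi_pi _ fun n _ ↦ hφx n (ht n)
      _ ≤ c ^ S.card := Finset.prod_le_pow_card _ _ _ fun n _ ↦
          (Measure.map_apply (hφx n) (ht n)).symm.trans_le (hc (x n) n)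
  exact (lintegral_mono hsection).trans_eq (by simp)

lemma tendsto_perturbSymbols [Countable ι] [TopologicalSpace A] [SecondCountableTopology A]
    [OpensMeasurableSpace A] {ψ : ℕ → A → Ω → A} (hψ : ∀ k, Measurable (Function.uncurry (ψ k)))
    (hlim : ∀ a ω, Tendsto (fun k ↦ ψ k a ω) atTop (𝓝 a)) (μ : ProbabilityMeasure (ι → A)) :
    Tendsto (β := ProbabilityMeasure (ι → A)) (fun k ↦ ⟨perturbSymbols (ψ k) P μ.toMeasure,
      isProbabilityMeasure_perturbSymbols (hψ k)⟩) atTop (𝓝 μ) := by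
  have hdist := (tendstoInDistribution_of_ae_tendsto (l := atTop) (Z := Prod.fst)
    (μ' := μ.toMeasure.prod (Measure.infinitePi fun _ : ι ↦ P))
    (fun k ↦ (measurable_apply_coordinates (hψ k)).aemeasurable) measurable_fst.aemeasurable
    (ae_of_all _ fun p ↦ tendsto_pi_nhds.2 fun n ↦ hlim (p.1 n) (p.2 n))).tendsto
  convert! hdist using 1
  exact congrArg 𝓝 (Subtype.ext (by simp))

lemma measurable_fullShift : Measurable (fullShift : (ℤ → A) → ℤ → A) := by
  unfold fullShift
  fun_prop

lemma map_fullShift_infinitePi :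
    (Measure.infinitePi fun _ : ℤ ↦ P).map fullShift = Measure.infinitePi fun _ ↦ P := by
  convert! Measure.infinitePi_map_piCongrLeft (fun _ ↦ P) (Equiv.addRight (1 : ℤ)) using 2
  ext x n
  obtain ⟨m, rfl⟩ := (Equiv.addRight (1 : ℤ)).surjective n
  rw [MeasurableEquiv.coe_piCongrLeft, Equiv.piCongrLeft_apply_apply]
  simp [fullShift]

lemma map_fullShift_perturbSymbols {μ : Measure (ℤ → A)} [SFinite μ]
    (hφ : Measurable (Function.uncurry φ)) (hμ : μ.map fullShift = μ) :
    (perturbSymbols φ P μ).map fullShift = perturbSymbols φ P μ := by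
  have hprod : MeasurePreserving (Prod.map fullShift fullShift)
      (μ.prod (Measure.infinitePi fun _ : ℤ ↦ P)) (μ.prod (Measure.infinitePi fun _ ↦ P)) :=
    .prod ⟨measurable_fullShift, hμ⟩ ⟨measurable_fullShift, map_fullShift_infinitePi⟩
  have hmeas := measurable_apply_coordinates (ι := ℤ) hφ
  have hcomm : (fullShift ∘ fun p n ↦ φ (p.1 n) (p.2 n)) =
      (fun p n ↦ φ (p.1 n) (p.2 n)) ∘ Prod.map fullShift fullShift := rfl
  rw [perturbSymbols, Measure.map_map measurable_fullShift hmeas, hcomm,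
    ← Measure.map_map hmeas hprod.measurable, hprod.map_eq]

lemma upperLocalDim_perturbSymbols_eq_top [MetricSpace B] [OpensMeasurableSpace B]
    {μ : Measure (ℤ → A)} [IsProbabilityMeasure μ] (hφ : Measurable (Function.uncurry φ))
    (hdiff : UniformlyDiffuse fun a ↦ P.map (φ a)) (y : ℤ → B) :
    upperLocalDim shiftDist (perturbSymbols φ P μ) y = ⊤ := by
  have := isProbabilityMeasure_perturbSymbols (P := P) (μ := μ) hφ
  refine upperLocalDim_eq_top_of_forall_measure_le_pow fun c hc ↦ ?_
  obtain ⟨r, hr, hrc⟩ := hdiff c hc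
  refine ⟨r / (1 + r), by positivity, fun N ↦ ?_⟩
  let S : Finset ℤ := (Finset.range N).map Nat.castEmbedding
  calc perturbSymbols φ P μ {z | shiftDist y z ≤ (1 / 2) ^ N * (r / (1 + r))}
      ≤ perturbSymbols φ P μ ((S : Set ℤ).pi fun n ↦ closedBall (y n) r) := by
        refine measure_mono fun z hz n hn ↦ mem_closedBall'.2 (dist_le_of_shiftDist_le hr.le ?_ hz)
        obtain ⟨m, hm, rfl⟩ := Finset.mem_map.1 hn
        simpa using (Finset.mem_range.1 hm).le
    _ ≤ c ^ S.card :=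
        perturbSymbols_pi_le hφ (fun n ↦ measurableSet_closedBall) fun a n ↦ hrc a (y n)
    _ = c ^ N := by simp [S]

end PerturbSymbols

section DiffuseNoise

lemma nullSingletonClass_map_of_injective {Ω M : Type*} [MeasurableSpace Ω] [MeasurableSpace M]
    [MeasurableSingletonClass M] {P : Measure Ω} [NullSingletonClass P] {g : Ω → M}
    (hg : Measurable g) (hinj : Function.Injective g) : NullSingletonClass (P.map g) where
  measure_singleton x := by
    rw [Measure.map_apply hg (measurableSet_singleton x)]
    exact (subsingleton_singleton.preimage hinj).measure_zero P

variable {Ω M : Type*} [MeasurableSpace Ω] [MeasurableSpace.CountablySeparated Ω] [MetricSpace M]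
  [CompleteSpace M] [PerfectSpace M] [MeasurableSpace M] [BorelSpace M]

lemma exists_measurable_injective_dist_le (a : M) {δ : ℝ} (hδ : 0 < δ) :
    ∃ g : Ω → M, Measurable g ∧ Function.Injective g ∧ ∀ ω, dist (g ω) a ≤ δ := by
  have hperfect : Perfect (closure (ball a δ ∩ univ)) :=
    ((PerfectSpace.univ_preperfect (α := M)).open_inter isOpen_ball).perfect_closure
  obtain ⟨f, hf, hfc, hfi⟩ := hperfect.exists_nat_bool_injection
    ⟨a, subset_closure ⟨mem_ball_self hδ, mem_univ a⟩⟩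
  obtain ⟨h, hm, hi⟩ := MeasurableSpace.measurable_injection_nat_bool_of_countablySeparated Ω
  refine ⟨f ∘ h, hfc.measurable.comp hm, hfi.comp hi, fun ω ↦ ?_⟩
  exact closure_ball_subset_closedBall (closure_mono inter_subset_left (hf (mem_range_self (h ω))))

lemma exists_uniformlyDiffuse_dist_simpleFunc_le {A : Type*} [MeasurableSpace A]
    [SecondCountableTopology M] (P : Measure Ω) [IsFiniteMeasure P] [NullSingletonClass P]
    (f : SimpleFunc A M) {δ : ℝ} (hδ : 0 < δ) :
    ∃ φ : A → Ω → M, Measurable (Function.uncurry φ) ∧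
      UniformlyDiffuse (fun a ↦ P.map (φ a)) ∧ ∀ a ω, dist (φ a ω) (f a) ≤ δ := by
  choose g hgm hgi hgδ using fun b : M ↦ exists_measurable_injective_dist_le (Ω := Ω) b hδ
  have hnull (b : f.range) : NullSingletonClass (P.map (g b)) :=
    nullSingletonClass_map_of_injective (hgm b) (hgi b)
  refine ⟨fun a ↦ g (f a), ?_, ?_, fun a ω ↦ hgδ (f a) ω⟩
  · exact (f.comp Prod.fst measurable_fst).measurable_bind (fun b p ↦ g b p.2)
      fun b ↦ (hgm b).comp measurable_snd
  · exact (uniformlyDiffuse_of_finite fun b : f.range ↦ P.map (g b)).comp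
      fun a ↦ ⟨f a, f.mem_range_self a⟩

lemma exists_uniformlyDiffuse_tendsto [TopologicalSpace.SeparableSpace M] [Nonempty M]
    (P : Measure Ω) [IsFiniteMeasure P] [NullSingletonClass P] :
    ∃ φ : ℕ → M → Ω → M, (∀ k, Measurable (Function.uncurry (φ k))) ∧
      (∀ k, UniformlyDiffuse fun a ↦ P.map (φ k a)) ∧
      ∀ a ω, Tendsto (fun k ↦ φ k a ω) atTop (𝓝 a) := by
  have := UniformSpace.secondCountable_of_separable M
  let f := SimpleFunc.nearestPt (TopologicalSpace.denseSeq M)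
  choose φ hφ hdiff hdist using fun k : ℕ ↦
    exists_uniformlyDiffuse_dist_simpleFunc_le P (f k) (Nat.one_div_pos_of_nat (α := ℝ) (n := k))
  refine ⟨φ, hφ, hdiff, fun a ω ↦ ?_⟩
  have hf : Tendsto (fun k ↦ f k a) atTop (𝓝 a) :=
    SimpleFunc.tendsto_nearestPt (TopologicalSpace.denseRange_denseSeq M a)
  refine tendsto_of_tendsto_of_dist hf (squeeze_zero (fun _ ↦ dist_nonneg) (fun k ↦ ?_)
    tendsto_one_div_add_atTop_nhds_zero_nat)
  rw [dist_comm]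
  exact hdist k a ω

lemma dense_setOf_forall_upperLocalDim_shiftDist_eq_top [TopologicalSpace.SeparableSpace M] :
    Dense {μ : {ν : ProbabilityMeasure (ℤ → M) // ν.toMeasure.map fullShift = ν.toMeasure} |
      ∀ x, upperLocalDim shiftDist μ.1.toMeasure x = ⊤} := by
  intro μ
  have := UniformSpace.secondCountable_of_separable M
  have : Nonempty M := μ.1.toMeasure.nonempty_of_neZero.map fun x ↦ x 0
  obtain ⟨φ, hφ, hdiff, hlim⟩ :=
    exists_uniformlyDiffuse_tendsto (M := M) (volume : Measure unitInterval)
  refine mem_closure_of_tendsto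
    (f := fun k ↦ ⟨⟨perturbSymbols (φ k) volume μ.1.toMeasure,
      isProbabilityMeasure_perturbSymbols (hφ k)⟩, map_fullShift_perturbSymbols (hφ k) μ.2⟩)
    (tendsto_subtype_rng.2 (tendsto_perturbSymbols hφ hlim μ.1))
    (Eventually.of_forall fun k ↦ upperLocalDim_perturbSymbols_eq_top (hφ k) (hdiff k))

end DiffuseNoise

/-- For the full shift on `ℤ → M` over a perfect Polish metric space `M`,
the set `PD` of invariant measures whose upper local dimension is infinite almost everywhere
(equivalently, with packing dimension `+∞`) is a dense `Gδ` subset of `M(T)`. -/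
theorem fullShift_packingDimInfinite_denseGδ {M : Type*} [MetricSpace M] [CompleteSpace M]
    [TopologicalSpace.SeparableSpace M] [PerfectSpace M]
    [MeasurableSpace M] [BorelSpace M] :
    IsGδ {μ : {ν : ProbabilityMeasure (ℤ → M) // ν.toMeasure.map fullShift = ν.toMeasure} |
        ∀ᵐ x ∂μ.1.toMeasure, upperLocalDim shiftDist μ.1.toMeasure x = ⊤} ∧
    Dense {μ : {ν : ProbabilityMeasure (ℤ → M) // ν.toMeasure.map fullShift = ν.toMeasure} |
        ∀ᵐ x ∂μ.1.toMeasure, upperLocalDim shiftDist μ.1.toMeasure x = ⊤} := by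
  have := UniformSpace.secondCountable_of_separable M
  exact ⟨(isGδ_setOf_ae_mem (isGδ_setOf_upperLocalDim_eq_top continuous_shiftDist)).preimage
      continuous_subtype_val,
    dense_setOf_forall_upperLocalDim_shiftDist_eq_top.mono fun μ hμ ↦ ae_of_all _ hμ⟩
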